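/- Suppose ≺ is a partition-suitable partial order on H. If H₁, H₂ ∈ Φ(W) with H₁ ≠ H₂, then H₁ ∩ H₂ = ∅. -/

import Mathlib

open Classical

noncomputable section

variable {α : Type}

/-- The strict order `lt` on the collection `HH` of subsets is partition
suitable: whenever `H₁, H₂ ∈ HH` intersect, there is `H* ∈ HH` with
`H* ⊆ H₁ ∪ H₂`, `H₁ ⪯ H*` and `H₂ ⪯ H*`. -/
def PartitionSuitable (HH : Set (Set α)) (lt : Set α → Set α → Prop) : Prop :=
  ∀ H₁ ∈ HH, ∀ H₂ ∈ HH, (H₁ ∩ H₂).Nonempty →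
    ∃ Hs ∈ HH, Hs ⊆ H₁ ∪ H₂ ∧ (lt H₁ Hs ∨ H₁ = Hs) ∧ (lt H₂ Hs ∨ H₂ = Hs)

/-- `Φ(W)`: the `≺`-maximal members of the collection `HH` contained in `W`. -/
def PhiA (HH : Set (Set α)) (lt : Set α → Set α → Prop) (W : Set α) :
    Set (Set α) :=
  {H | H ∈ HH ∧ H ⊆ W ∧ ∀ H' ∈ HH, H' ⊆ W → H' ≠ H → ¬ lt H H'}

/-- `ψ(W) = W \ ⋃ Φ(W)`. -/
def psiA (HH : Set (Set α)) (lt : Set α → Set α → Prop) (W : Set α) : Set α :=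
  W \ ⋃₀ PhiA HH lt W

/-- The partition `[W]`, defined recursively by `[∅] = ∅` and
`[W] = Φ(W) ∪ [ψ(W)]`.  (The cardinality guard is automatically satisfied
whenever `HH` contains all singletons, since then `ψ(W) ⊊ W` for `W ≠ ∅`.) -/
def partnA (HH : Set (Set α)) (lt : Set α → Set α → Prop) (W : Set α) :
    Set (Set α) :=
  if W = ∅ then ∅
  else if h : (psiA HH lt W).ncard < W.ncard then
    PhiA HH lt W ∪ partnA HH lt (psiA HH lt W)
  else PhiA HH lt W
termination_by W.ncard
decreasing_by exact h

section

variable {HH : Set (Set α)} {lt : Set α → Set α → Prop}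

theorem eq_of_mem_PhiA_of_lt_or_eq {W H K : Set α} (hH : H ∈ PhiA HH lt W)
    (hK : K ∈ HH) (hKW : K ⊆ W) (hHK : lt H K ∨ H = K) : H = K := by
  by_contra hne
  exact hH.2.2 K hK hKW (Ne.symm hne) (hHK.resolve_right hne)

theorem Phi_pairwise_disjoint_general (hsuit : PartitionSuitable HH lt) (W : Set α) :
    (PhiA HH lt W).PairwiseDisjoint id := by
  intro H₁ h₁ H₂ h₂ hne
  by_contra hmeet
  obtain ⟨K, hK, hKsub, hle₁, hle₂⟩ :=
    hsuit H₁ h₁.1 H₂ h₂.1 (Set.not_disjoint_iff_nonempty_inter.mp hmeet)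
  have hKW : K ⊆ W := hKsub.trans (Set.union_subset h₁.2.1 h₂.2.1)
  have eq₁ : H₁ = K := eq_of_mem_PhiA_of_lt_or_eq h₁ hK hKW hle₁
  have eq₂ : H₂ = K := eq_of_mem_PhiA_of_lt_or_eq h₂ hK hKW hle₂
  exact hne (eq₁.trans eq₂.symm)

end

/-- **Proposition (maximal heads are disjoint).**  If `≺` is a
partition-suitable partial order on `HH` and `H₁, H₂ ∈ Φ(W)` with `H₁ ≠ H₂`,
then `H₁ ∩ H₂ = ∅`. -/
theorem Phi_pairwise_disjoint {α : Type} (V : Set α) (HH : Set (Set α))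
    (hne : ∀ H ∈ HH, H.Nonempty) (hsub : ∀ H ∈ HH, H ⊆ V)
    (hsingle : ∀ v ∈ V, {v} ∈ HH)
    (lt : Set α → Set α → Prop)
    (hirr : ∀ H, ¬ lt H H) (htrans : ∀ a b c, lt a b → lt b c → lt a c)
    (hsuit : PartitionSuitable HH lt)
    (W : Set α) (hW : W ⊆ V)
    (H₁ H₂ : Set α) (h1 : H₁ ∈ PhiA HH lt W) (h2 : H₂ ∈ PhiA HH lt W)
    (hne12 : H₁ ≠ H₂) : H₁ ∩ H₂ = ∅ :=
  (Phi_pairwise_disjoint_general hsuit W h1 h2 hne12).inter_eq
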